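/- Let S ⊆ V, let w^S be the minimizer of ℓ among weight vectors supported on S, and let T ⊆ V be disjoint from S. Then E(S) − E(S∪T) ≤ (1/(4λ)) ∑_{j∈T} ((∇ℓ(w^S))_j)². -/

import Mathlib

open scoped BigOperators RealInnerProductSpace

/-- The regularized gradient-matching objective
`ℓ(w) = ‖∑ᵢ wᵢ gᵢ − b‖₂² + λ ∑ᵢ wᵢ²`. -/
noncomputable def ell {V : Type*} [Fintype V] {d : ℕ}
    (g : V → EuclideanSpace ℝ (Fin d)) (b : EuclideanSpace ℝ (Fin d))
    (lam : ℝ) (w : V → ℝ) : ℝ :=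
  ‖(∑ i, w i • g i) - b‖ ^ 2 + lam * ∑ i, (w i) ^ 2

/-- `E(S) = inf { ℓ(w) : w supported on S }`. -/
noncomputable def EErr {V : Type*} [Fintype V] {d : ℕ}
    (g : V → EuclideanSpace ℝ (Fin d)) (b : EuclideanSpace ℝ (Fin d))
    (lam : ℝ) (S : Finset V) : ℝ :=
  sInf {y | ∃ w : V → ℝ, (∀ i ∉ S, w i = 0) ∧ y = ell g b lam w}

/-- The gradient of `ℓ`: `(∇ℓ(u))ⱼ = 2⟨∑ᵢ uᵢ gᵢ − b, gⱼ⟩ + 2λ uⱼ`. -/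
noncomputable def gradEll {V : Type*} [Fintype V] {d : ℕ}
    (g : V → EuclideanSpace ℝ (Fin d)) (b : EuclideanSpace ℝ (Fin d))
    (lam : ℝ) (u : V → ℝ) (j : V) : ℝ :=
  2 * ⟪(∑ i, u i • g i) - b, g j⟫ + 2 * lam * u j

/-!
Only two properties of `ℓ` matter: it has partial derivatives, and it lies above its tangent
plane at `w^S` by at least `λ ‖w - w^S‖²`, because the quadratic term `‖∑ hᵢ gᵢ‖²` of its
expansion is nonnegative. Minimizing this separable minorant over `w` supported on `S ∪ T`
coordinate by coordinate bounds the decrease by `(1 / (4λ)) ∑ (∂ⱼℓ(w^S))²` over `S ∪ T`, and the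
partial derivatives in `S` vanish since `w^S` is a minimizer there.
-/

lemma sInf_image_eq_of_isMinOn {α β : Type*} [ConditionallyCompleteLattice β] {f : α → β}
    {s : Set α} {a : α} (ha : a ∈ s) (hmin : IsMinOn f s a) : sInf (f '' s) = f a :=
  IsLeast.csInf_eq ⟨Set.mem_image_of_mem f ha, Set.forall_mem_image.2 hmin⟩

lemma neg_sq_le_mul_add_mul_sq {K : Type*} [Field K] [LinearOrder K] [IsStrictOrderedRing K]
    {lam : K} (hlam : 0 < lam) (a x : K) :
    -(1 / (4 * lam) * a ^ 2) ≤ a * x + lam * x ^ 2 := by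
  have complete_square :
      a * x + lam * x ^ 2 + 1 / (4 * lam) * a ^ 2 = lam * (x + a / (2 * lam)) ^ 2 := by
    field_simp
    ring
  have : 0 ≤ lam * (x + a / (2 * lam)) ^ 2 := by positivity
  linarith

section CoordinateSubspaces

variable {V : Type*} {f : (V → ℝ) → ℝ} {G u w : V → ℝ} {lam : ℝ} {S U : Finset V}

/-- The coordinate subspace of weight vectors vanishing outside `S`: the feasible set of the
infimum `E(S)`. It is stated coordinatewise, exactly as in `EErr`, rather than through
`Function.support`. -/
def supportedOn (S : Finset V) : Set (V → ℝ) :=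
  {w | ∀ i ∉ S, w i = 0}

lemma supportedOn_mono (hSU : S ⊆ U) : supportedOn S ⊆ supportedOn U :=
  fun _ hw i hi => hw i fun hiS => hi (hSU hiS)

lemma add_smul_single_mem_supportedOn [DecidableEq V] (hu : u ∈ supportedOn S) {j : V}
    (hj : j ∈ S) (t : ℝ) : u + t • Pi.single j 1 ∈ supportedOn S := by
  intro i hi
  have hij : i ≠ j := fun h => hi (h ▸ hj)
  simp [hu i hi, hij]

lemma partialDeriv_eq_zero_of_isMinOn_supportedOn [DecidableEq V] (hu : u ∈ supportedOn S)
    (hmin : IsMinOn f (supportedOn S) u) {j : V} (hj : j ∈ S) {f' : ℝ}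
    (hderiv : HasLineDerivAt ℝ f f' u (Pi.single j 1)) : f' = 0 :=
  hmin.hasLineDerivAt_eq_zero hderiv
    (.of_forall fun t => add_smul_single_mem_supportedOn hu hj t)

lemma sub_le_sum_sq_of_quadratic_minorant (hlam : 0 < lam)
    (hminorant : f u + ∑ j ∈ U, (G j * (w j - u j) + lam * (w j - u j) ^ 2) ≤ f w) :
    f u - f w ≤ 1 / (4 * lam) * ∑ j ∈ U, G j ^ 2 := by
  have hsum : -(1 / (4 * lam) * ∑ j ∈ U, G j ^ 2) ≤
      ∑ j ∈ U, (G j * (w j - u j) + lam * (w j - u j) ^ 2) := by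
    rw [Finset.mul_sum, ← Finset.sum_neg_distrib]
    exact Finset.sum_le_sum fun j _ => neg_sq_le_mul_add_mul_sq hlam (G j) (w j - u j)
  linarith

theorem marginal_decrease_upper_bound_general [DecidableEq V] {T : Finset V} (hlam : 0 < lam)
    (hu : u ∈ supportedOn S) (hmin : IsMinOn f (supportedOn S) u)
    (hderiv : ∀ j ∈ S, HasLineDerivAt ℝ f (G j) u (Pi.single j 1))
    (hminorant : ∀ w ∈ supportedOn (S ∪ T),
      f u + ∑ j ∈ S ∪ T, (G j * (w j - u j) + lam * (w j - u j) ^ 2) ≤ f w) :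
    sInf (f '' supportedOn S) - sInf (f '' supportedOn (S ∪ T)) ≤
      1 / (4 * lam) * ∑ j ∈ T, G j ^ 2 := by
  have hG : ∀ j ∈ S, G j = 0 := fun j hj =>
    partialDeriv_eq_zero_of_isMinOn_supportedOn hu hmin hj (hderiv j hj)
  have hsum : ∑ j ∈ T, G j ^ 2 = ∑ j ∈ S ∪ T, G j ^ 2 := by
    refine Finset.sum_subset Finset.subset_union_right fun j hj hjT => ?_
    rw [hG j ((Finset.mem_union.1 hj).resolve_right hjT), zero_pow two_ne_zero]
  have hlower : f u - 1 / (4 * lam) * ∑ j ∈ S ∪ T, G j ^ 2 ≤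
      sInf (f '' supportedOn (S ∪ T)) := by
    refine le_csInf ⟨f u, u, supportedOn_mono Finset.subset_union_left hu, rfl⟩ ?_
    rintro _ ⟨w, hw, rfl⟩
    linarith [sub_le_sum_sq_of_quadratic_minorant hlam (hminorant w hw)]
  rw [sInf_image_eq_of_isMinOn hu hmin, hsum]
  linarith

end CoordinateSubspaces

section GradientMatching

variable {V : Type*} [Fintype V] {d : ℕ} (g : V → EuclideanSpace ℝ (Fin d))
  (b : EuclideanSpace ℝ (Fin d)) (lam : ℝ)

lemma EErr_eq_sInf_image (S : Finset V) :
    EErr g b lam S = sInf (ell g b lam '' supportedOn S) := by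
  simp only [EErr, Set.image, supportedOn, Set.mem_ofPred_eq, eq_comm]

lemma sum_gradEll_mul (u h : V → ℝ) :
    ∑ j, gradEll g b lam u j * h j =
      2 * ⟪(∑ i, u i • g i) - b, ∑ i, h i • g i⟫ + 2 * lam * ∑ j, u j * h j := by
  rw [inner_sum, Finset.mul_sum, Finset.mul_sum, ← Finset.sum_add_distrib]
  refine Finset.sum_congr rfl fun j _ => ?_
  rw [inner_smul_right, gradEll]
  ring

lemma ell_add (u h : V → ℝ) :
    ell g b lam (u + h) = ell g b lam u + ∑ j, gradEll g b lam u j * h j +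
      (‖∑ i, h i • g i‖ ^ 2 + lam * ∑ i, h i ^ 2) := by
  have hresidual : (∑ i, (u + h) i • g i) - b =
      ((∑ i, u i • g i) - b) + ∑ i, h i • g i := by
    simp only [Pi.add_apply, add_smul, Finset.sum_add_distrib]
    abel
  have hpenalty : ∑ i, (u + h) i ^ 2 = ∑ i, u i ^ 2 + 2 * ∑ i, u i * h i + ∑ i, h i ^ 2 := by
    simp only [Pi.add_apply, add_sq, Finset.sum_add_distrib, Finset.mul_sum, mul_assoc]
  rw [sum_gradEll_mul, ell, ell, hresidual, hpenalty, norm_add_sq_real]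
  ring

lemma ell_add_smul (u v : V → ℝ) (t : ℝ) :
    ell g b lam (u + t • v) = ell g b lam u + t * ∑ j, gradEll g b lam u j * v j +
      t ^ 2 * (‖∑ i, v i • g i‖ ^ 2 + lam * ∑ i, v i ^ 2) := by
  have hlin : ∑ j, gradEll g b lam u j * (t • v) j = t * ∑ j, gradEll g b lam u j * v j := by
    simp only [Pi.smul_apply, smul_eq_mul, Finset.mul_sum, mul_left_comm]
  have hfit : ∑ i, (t • v) i • g i = t • ∑ i, v i • g i := by
    simp only [Pi.smul_apply, smul_assoc, Finset.smul_sum]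
  have hpenalty : ∑ i, (t • v) i ^ 2 = t ^ 2 * ∑ i, v i ^ 2 := by
    simp only [Pi.smul_apply, smul_eq_mul, mul_pow, Finset.mul_sum]
  rw [ell_add, hlin, hfit, hpenalty, norm_smul, mul_pow, Real.norm_eq_abs, sq_abs]
  ring

lemma hasLineDerivAt_ell (u v : V → ℝ) :
    HasLineDerivAt ℝ (ell g b lam) (∑ j, gradEll g b lam u j * v j) u v := by
  simp only [HasLineDerivAt, ell_add_smul]
  set slope := ∑ j, gradEll g b lam u j * v j
  set curvature := ‖∑ i, v i • g i‖ ^ 2 + lam * ∑ i, v i ^ 2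
  have hlin := (hasDerivAt_id (0 : ℝ)).mul_const slope
  have hquad := (hasDerivAt_pow 2 (0 : ℝ)).mul_const curvature
  simpa using (hlin.const_add (ell g b lam u)).fun_add hquad

lemma hasLineDerivAt_ell_single [DecidableEq V] (u : V → ℝ) (j : V) :
    HasLineDerivAt ℝ (ell g b lam) (gradEll g b lam u j) u (Pi.single j 1) := by
  simpa [Pi.single_apply] using hasLineDerivAt_ell g b lam u (Pi.single j 1)

variable {g b lam}

lemma ell_quadratic_minorant {U : Finset V} {u w : V → ℝ} (hu : u ∈ supportedOn U)
    (hw : w ∈ supportedOn U) :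
    ell g b lam u + ∑ j ∈ U, (gradEll g b lam u j * (w j - u j) + lam * (w j - u j) ^ 2) ≤
      ell g b lam w := by
  have hsum : ∑ j ∈ U, (gradEll g b lam u j * (w j - u j) + lam * (w j - u j) ^ 2) =
      ∑ j, gradEll g b lam u j * (w j - u j) + lam * ∑ j, (w j - u j) ^ 2 := by
    rw [Finset.mul_sum, ← Finset.sum_add_distrib]
    refine Finset.sum_subset (Finset.subset_univ U) fun j _ hj => ?_
    simp [hu j hj, hw j hj]
  have hexpand := ell_add g b lam u (w - u)
  simp only [add_sub_cancel, Pi.sub_apply] at hexpand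
  rw [hsum, hexpand]
  linarith [sq_nonneg ‖∑ i, (w i - u i) • g i‖]

end GradientMatching

/-- For `T` disjoint from `S`: `E(S) − E(S∪T) ≤ (1/(4λ)) ∑_{j∈T} ((∇ℓ(w^S))ⱼ)²`. -/
theorem marginal_decrease_upper_bound
    {V : Type*} [Fintype V] [DecidableEq V] {d : ℕ} (hd : 1 ≤ d)
    (g : V → EuclideanSpace ℝ (Fin d))
    (b : EuclideanSpace ℝ (Fin d)) (lam : ℝ) (hlam : 0 < lam)
    (S : Finset V)
    (wS : V → ℝ) (hwS_supp : ∀ i ∉ S, wS i = 0)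
    (hwS_min : ∀ w' : V → ℝ, (∀ i ∉ S, w' i = 0) →
      ell g b lam wS ≤ ell g b lam w')
    (T : Finset V) (hST : Disjoint S T) :
    EErr g b lam S - EErr g b lam (S ∪ T) ≤
      (1 / (4 * lam)) * ∑ j ∈ T, (gradEll g b lam wS j) ^ 2 := by
  simp only [EErr_eq_sInf_image]
  exact marginal_decrease_upper_bound_general hlam hwS_supp hwS_min
    (fun j _ => hasLineDerivAt_ell_single g b lam wS j)
    fun _ hw => ell_quadratic_minorant (supportedOn_mono Finset.subset_union_left hwS_supp) hw
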